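/- The modular j-function j: ℍ → ℂ satisfies the third-order algebraic differential equation S(j) + R(j)·(j')² = 0 on the upper half-plane ℍ, where R(y) = (y² - 1968y + 2654208)/(2y²(y-1728)²). -/

import Mathlib

/-!
By Ramanujan's identities for the derivatives of `E₂`, `E₄` and `E₆`, the derivatives of Klein's
function `E₄³ / Δ` are rational functions of these three series, and the differential equation
becomes an identity between rational functions. Ramanujan's identities themselves hold because the
difference of the two sides is in each case a level one cusp form of weight less than `12`.

The properties assumed of `J` determine it: near the cusp, `J` is a function of `q = e^{2πiz}`, and
it is injective there because two points of imaginary part greater than `1` in the same orbit differ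
by an integer. An injective holomorphic function has at most a simple pole at a puncture, so `J Δ`
has a limit `L` at `i∞`, and `J Δ - L E₄³` is a cusp form of weight `12`, that is, a multiple of
`Δ`. Hence `J` is an affine function of `E₄³ / Δ`, which the values at `i` and `ρ` pin down.
-/

open Complex

/-- The Schwarzian derivative of a function `f : ℂ → ℂ`:
`S(f) = (f''/f')' - (1/2)(f''/f')²`. -/
noncomputable def schwarzian (f : ℂ → ℂ) (z : ℂ) : ℂ :=
  deriv (fun w => deriv (deriv f) w / deriv f w) z - (deriv (deriv f) z / deriv f z) ^ 2 / 2

/-- `R(y) = (y² - 1968 y + 2654208)/(2 y² (y - 1728)²)`. -/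
noncomputable def Rj (y : ℂ) : ℂ :=
  (y ^ 2 - 1968 * y + 2654208) / (2 * y ^ 2 * (y - 1728) ^ 2)

/-- The upper half-plane, as a subset of `ℂ`. -/
def UHP : Set ℂ := {z : ℂ | 0 < z.im}

/-- The Möbius action of `SL₂(ℤ)` on the upper half-plane (as points of `ℂ`). -/
noncomputable def moebiusZ (g : Matrix.SpecialLinearGroup (Fin 2) ℤ) (z : ℂ) : ℂ :=
  ((((g : Matrix (Fin 2) (Fin 2) ℤ) 0 0 : ℤ) : ℂ) * z + (((g : Matrix (Fin 2) (Fin 2) ℤ) 0 1 : ℤ) : ℂ)) /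
    ((((g : Matrix (Fin 2) (Fin 2) ℤ) 1 0 : ℤ) : ℂ) * z + (((g : Matrix (Fin 2) (Fin 2) ℤ) 1 1 : ℤ) : ℂ))

section RamanujanSystem
open Filter Topology

/-- `P`, `Q`, `R` solve Ramanujan's differential system on `U`, in which `c⁻¹ d/dz` is the
derivation. For the Eisenstein series `E₂`, `E₄`, `E₆` one has `c = 2πi`, this derivation being
`q d/dq` with `q = e^{2πiz}`. -/
structure IsRamanujanSystem (c : ℂ) (P Q R : ℂ → ℂ) (U : Set ℂ) : Prop where
  hasDerivAt_P : ∀ z ∈ U, HasDerivAt P (c * ((P z ^ 2 - Q z) / 12)) z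
  hasDerivAt_Q : ∀ z ∈ U, HasDerivAt Q (c * ((P z * Q z - R z) / 3)) z
  hasDerivAt_R : ∀ z ∈ U, HasDerivAt R (c * ((P z * R z - Q z ^ 2) / 2)) z

namespace IsRamanujanSystem

variable {c : ℂ} {P Q R J : ℂ → ℂ} {U : Set ℂ} {z : ℂ}

theorem hasDerivAt_cube_sub_sq (h : IsRamanujanSystem c P Q R U) (hz : z ∈ U) :
    HasDerivAt (fun w ↦ Q w ^ 3 - R w ^ 2) (c * P z * (Q z ^ 3 - R z ^ 2)) z := by
  convert! ((h.hasDerivAt_Q z hz).fun_pow 3).fun_sub ((h.hasDerivAt_R z hz).fun_pow 2) using 1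
  push_cast
  ring

theorem hasDerivAt_jInvariant (h : IsRamanujanSystem c P Q R U) (hz : z ∈ U)
    (hΔ : Q z ^ 3 - R z ^ 2 ≠ 0) :
    HasDerivAt (fun w ↦ 1728 * Q w ^ 3 / (Q w ^ 3 - R w ^ 2))
      (-c * (1728 * Q z ^ 2 * R z / (Q z ^ 3 - R z ^ 2))) z := by
  convert! (((h.hasDerivAt_Q z hz).fun_pow 3).const_mul 1728).fun_div
    (h.hasDerivAt_cube_sub_sq hz) hΔ using 1
  push_cast
  field_simp
  ring

theorem hasDerivAt_jDerivative (h : IsRamanujanSystem c P Q R U) (hz : z ∈ U)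
    (hΔ : Q z ^ 3 - R z ^ 2 ≠ 0) (hQ : Q z ≠ 0) (hR : R z ≠ 0) :
    HasDerivAt (fun w ↦ -c * (1728 * Q w ^ 2 * R w / (Q w ^ 3 - R w ^ 2)))
      (-c * (1728 * Q z ^ 2 * R z / (Q z ^ 3 - R z ^ 2)) *
        (c * (P z / 6 - 2 * R z / (3 * Q z) - Q z ^ 2 / (2 * R z)))) z := by
  convert! (((((h.hasDerivAt_Q z hz).fun_pow 2).const_mul 1728).fun_mul
    (h.hasDerivAt_R z hz)).fun_div (h.hasDerivAt_cube_sub_sq hz) hΔ).const_mul (-c) using 1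
  push_cast
  field_simp
  ring

theorem deriv_eq (h : IsRamanujanSystem c P Q R U) (hU : IsOpen U)
    (hΔ : ∀ w ∈ U, Q w ^ 3 - R w ^ 2 ≠ 0)
    (hJ : ∀ w ∈ U, J w = 1728 * Q w ^ 3 / (Q w ^ 3 - R w ^ 2)) (hz : z ∈ U) :
    deriv J z = -c * (1728 * Q z ^ 2 * R z / (Q z ^ 3 - R z ^ 2)) :=
  ((h.hasDerivAt_jInvariant hz (hΔ z hz)).congr_of_eventuallyEq
    (eventually_of_mem (hU.mem_nhds hz) hJ)).deriv

theorem deriv_deriv_div_deriv_eq (h : IsRamanujanSystem c P Q R U) (hc : c ≠ 0) (hU : IsOpen U)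
    (hΔ : ∀ w ∈ U, Q w ^ 3 - R w ^ 2 ≠ 0)
    (hJ : ∀ w ∈ U, J w = 1728 * Q w ^ 3 / (Q w ^ 3 - R w ^ 2)) (hz : z ∈ U)
    (hQ : Q z ≠ 0) (hR : R z ≠ 0) :
    deriv (deriv J) z / deriv J z =
      c * (P z / 6 - 2 * R z / (3 * Q z) - Q z ^ 2 / (2 * R z)) := by
  have hJ' : deriv J =ᶠ[𝓝 z] fun w ↦ -c * (1728 * Q w ^ 2 * R w / (Q w ^ 3 - R w ^ 2)) :=
    eventually_of_mem (hU.mem_nhds hz) fun _ ↦ h.deriv_eq hU hΔ hJ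
  have hΔz := hΔ z hz
  rw [hJ'.deriv_eq, (h.hasDerivAt_jDerivative hz hΔz hQ hR).deriv, h.deriv_eq hU hΔ hJ hz,
    mul_div_cancel_left₀]
  simp [hc, hΔz, hQ, hR]

theorem schwarzian_add_Rj_mul_deriv_sq (h : IsRamanujanSystem c P Q R U) (hc : c ≠ 0)
    (hU : IsOpen U) (hΔ : ∀ w ∈ U, Q w ^ 3 - R w ^ 2 ≠ 0)
    (hJ : ∀ w ∈ U, J w = 1728 * Q w ^ 3 / (Q w ^ 3 - R w ^ 2)) (hz : z ∈ U)
    (hJ₀ : J z ≠ 0) (hJ₁ : J z ≠ 1728) :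
    schwarzian J z + Rj (J z) * deriv J z ^ 2 = 0 := by
  have hΔz := hΔ z hz
  have hJ_sub : J z - 1728 = 1728 * R z ^ 2 / (Q z ^ 3 - R z ^ 2) := by
    rw [hJ z hz]
    field_simp
    ring
  have hQ : Q z ≠ 0 := fun hQ ↦ hJ₀ (by simp [hJ z hz, hQ])
  have hR : R z ≠ 0 := fun hR ↦ hJ₁ (sub_eq_zero.mp (by simp [hJ_sub, hR]))
  have hlog : (fun w ↦ deriv (deriv J) w / deriv J w) =ᶠ[𝓝 z]
      fun w ↦ c * (P w / 6 - 2 * R w / (3 * Q w) - Q w ^ 2 / (2 * R w)) := by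
    filter_upwards [hU.mem_nhds hz, (h.hasDerivAt_Q z hz).continuousAt.eventually_ne hQ,
      (h.hasDerivAt_R z hz).continuousAt.eventually_ne hR] with w
    exact h.deriv_deriv_div_deriv_eq hc hU hΔ hJ
  have hlog' := ((((h.hasDerivAt_P z hz).div_const 6).fun_sub
    (((h.hasDerivAt_R z hz).const_mul 2).fun_div ((h.hasDerivAt_Q z hz).const_mul 3)
      (mul_ne_zero three_ne_zero hQ))).fun_sub
    (((h.hasDerivAt_Q z hz).fun_pow 2).fun_div ((h.hasDerivAt_R z hz).const_mul 2)
      (mul_ne_zero two_ne_zero hR))).const_mul c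
  rw [schwarzian, hlog.deriv_eq, hlog'.deriv, hlog.eq_of_nhds, Rj, hJ_sub,
    h.deriv_eq hU hΔ hJ hz, hJ z hz]
  generalize P z = p, Q z = q, R z = r at *
  push_cast
  field_simp
  ring

end IsRamanujanSystem

end RamanujanSystem

section InjectiveHolomorphic
open Filter Topology

theorem exists_analyticAt_pow_eq {h : ℂ → ℂ} {c : ℂ} (hh : AnalyticAt ℂ h c) (hc : h c ≠ 0)
    {n : ℕ} (hn : n ≠ 0) : ∃ k : ℂ → ℂ, AnalyticAt ℂ k c ∧ ∀ z, k z ^ n = h z := by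
  obtain ⟨a, ha⟩ := IsAlgClosed.exists_pow_nat_eq (h c) (Nat.pos_of_ne_zero hn)
  refine ⟨fun z ↦ a * (h z / h c) ^ ((n : ℂ)⁻¹), analyticAt_const.mul
    (hh.div_const.cpow analyticAt_const (by simp [div_self hc])), fun z ↦ ?_⟩
  rw [mul_pow, Complex.cpow_nat_inv_pow _ hn, ha, mul_div_cancel₀ _ hc]

theorem exists_eventuallyEq_add_pow_of_analyticAt {g : ℂ → ℂ} {c : ℂ} (hg : AnalyticAt ℂ g c)
    (hconst : ¬ ∀ᶠ z in 𝓝 c, g z = g c) :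
    ∃ (n : ℕ) (φ : ℂ → ℂ), n ≠ 0 ∧ AnalyticAt ℂ φ c ∧ φ c = 0 ∧ deriv φ c ≠ 0 ∧
      ∀ᶠ z in 𝓝 c, g z = g c + φ z ^ n := by
  obtain ⟨n, h, hh, hhc, hgh⟩ :=
    (AnalyticAt.exists_eventuallyEq_pow_smul_nonzero_iff (hg.sub analyticAt_const)).mpr
      (by simpa only [Pi.sub_apply, sub_eq_zero] using hconst)
  have hn : n ≠ 0 := by
    rintro rfl
    simpa [hhc.symm] using hgh.self_of_nhds
  obtain ⟨k, hk, hkn⟩ := exists_analyticAt_pow_eq hh hhc hn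
  have hkc : k c ≠ 0 := fun h0 ↦ hhc (by rw [← hkn, h0, zero_pow hn])
  have hφ : HasDerivAt (fun z ↦ (z - c) * k z) (k c) c := by
    simpa using ((hasDerivAt_id' c).sub_const c).fun_mul hk.differentiableAt.hasDerivAt
  refine ⟨n, fun z ↦ (z - c) * k z, hn, (analyticAt_id.sub analyticAt_const).mul hk, by simp,
    by rwa [hφ.deriv], ?_⟩
  filter_upwards [hgh] with z hz
  simpa [mul_pow, hkn, sub_eq_iff_eq_add'] using hz

theorem not_eventually_const_of_injOn {g : ℂ → ℂ} {c a : ℂ} {s : Set ℂ} (hs : s ∈ 𝓝[≠] c)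
    (hinj : s.InjOn g) : ¬ ∀ᶠ z in 𝓝[≠] c, g z = a := by
  intro h
  obtain ⟨x, hxs, hgx⟩ := (h.and hs).exists.imp fun _ ↦ And.symm
  have hx : ∀ᶠ z in 𝓝[≠] c, z ≠ x := by
    rcases eq_or_ne c x with rfl | hcx
    · exact self_mem_nhdsWithin
    · exact eventually_ne_nhdsWithin hcx
  obtain ⟨y, ⟨hgy, hys⟩, hyx⟩ := ((h.and hs).and hx).exists
  exact hyx (hinj hys hxs (hgy.trans hgx.symm))

/- Near `c` one has `g = g c + φ ^ n` with `φ` a local coordinate, so `g` is `n`-to-one on punctured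
neighbourhoods of `c`. -/
theorem deriv_ne_zero_of_injOn {g : ℂ → ℂ} {c : ℂ} {s : Set ℂ} (hg : AnalyticAt ℂ g c)
    (hs : s ∈ 𝓝[≠] c) (hinj : s.InjOn g) : deriv g c ≠ 0 := by
  obtain ⟨n, φ, hn, hφ, hφc, hφ', hgφ⟩ := exists_eventuallyEq_add_pow_of_analyticAt hg
    fun h ↦ not_eventually_const_of_injOn hs hinj (h.filter_mono nhdsWithin_le_nhds)
  have hpre : ∀ᶠ w in 𝓝[≠] (0 : ℂ), ∃ y ∈ s, φ y = w ∧ g y = g c + w ^ n := by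
    have himage := image_mem_map (m := φ) (inter_mem (insert_mem_nhds_iff.mpr hs) hgφ)
    rw [hφ.hasStrictDerivAt.map_nhds_eq hφ', hφc] at himage
    filter_upwards [nhdsWithin_le_nhds himage, self_mem_nhdsWithin]
    rintro _ ⟨y, ⟨rfl | hys, hgy⟩, rfl⟩ hy
    · exact absurd hφc hy
    · exact ⟨y, hys, rfl, hgy⟩
  have hn1 : n = 1 := by
    by_contra hn1
    have hζ := Complex.isPrimitiveRoot_exp n hn
    set ζ := exp (2 * Real.pi * I / n)
    have hrot : Tendsto (ζ * ·) (𝓝[≠] 0) (𝓝[≠] 0) := by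
      refine tendsto_nhdsWithin_iff.mpr ⟨?_, ?_⟩
      · simpa using (tendsto_id.const_mul ζ).mono_left (nhdsWithin_le_nhds (a := (0 : ℂ)))
      · filter_upwards [self_mem_nhdsWithin] with w hw using mul_ne_zero (hζ.ne_zero hn) hw
    obtain ⟨w, ⟨⟨y, hys, hφy, hgy⟩, x, hxs, hφx, hgx⟩, hw⟩ :=
      ((hpre.and (hrot.eventually hpre)).and self_mem_nhdsWithin).exists
    have hyx : y = x := hinj hys hxs (by rw [hgy, hgx, mul_pow, hζ.pow_eq_one, one_mul])
    have hζ1 : ζ * w = 1 * w := by rw [one_mul, ← hφx, ← hyx, hφy]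
    exact hζ.ne_one (by omega) (mul_right_cancel₀ hw hζ1)
  subst hn1
  have hderiv : deriv g c = deriv φ c := by
    rw [EventuallyEq.deriv_eq hgφ]
    simp
  rwa [hderiv]

theorem exists_le_norm_sub_of_injOn {f : ℂ → ℂ} {a c : ℂ} {s : Set ℂ} (hf : AnalyticAt ℂ f a)
    (hs : s ∈ 𝓝 a) (hinj : s.InjOn f) (hac : a ≠ c) :
    ∃ δ > 0, ∀ᶠ q in 𝓝 c, q ∈ s → δ ≤ ‖f q - f a‖ := by
  obtain ⟨u, v, hu, hv, hau, hcv, huv⟩ := t2_separation hac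
  have hopen : 𝓝 (f a) ≤ map f (𝓝 a) :=
    hf.eventually_constant_or_nhds_le_map_nhds.resolve_left fun h ↦
      not_eventually_const_of_injOn (nhdsWithin_le_nhds hs) hinj
        (h.filter_mono nhdsWithin_le_nhds)
  obtain ⟨δ, hδ, hball⟩ :=
    Metric.mem_nhds_iff.mp (hopen (image_mem_map (inter_mem hs (hu.mem_nhds hau))))
  refine ⟨δ, hδ, ?_⟩
  filter_upwards [hv.mem_nhds hcv] with q hqv hqs
  by_contra! hlt
  obtain ⟨p, ⟨hps, hpu⟩, hpq⟩ := hball (mem_ball_iff_norm.mpr hlt)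
  exact huv.le_bot ⟨hpu, hinj hps hqs hpq ▸ hqv⟩

theorem exists_tendsto_sub_mul_inv_of_injOn {g : ℂ → ℂ} {c : ℂ} {s : Set ℂ}
    (hg : AnalyticAt ℂ g c) (hs : s ∈ 𝓝[≠] c) (hinj : s.InjOn g) :
    ∃ L, Tendsto (fun z ↦ (z - c) * (g z)⁻¹) (𝓝[≠] c) (𝓝 L) := by
  by_cases hgc : g c = 0
  · have hslope := hasDerivAt_iff_tendsto_slope.mp hg.differentiableAt.hasDerivAt
    refine ⟨(deriv g c)⁻¹, (hslope.inv₀ (deriv_ne_zero_of_injOn hg hs hinj)).congr fun z ↦ ?_⟩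
    rw [slope_def_field, hgc, sub_zero, inv_div, div_eq_mul_inv]
  · have hcont : ContinuousAt (fun z ↦ (z - c) * (g z)⁻¹) c :=
      (continuousAt_id.sub continuousAt_const).mul (hg.continuousAt.inv₀ hgc)
    exact ⟨_, hcont.tendsto.mono_left nhdsWithin_le_nhds⟩

theorem exists_analyticAt_eventuallyEq_of_isBoundedUnder {g : ℂ → ℂ} {c : ℂ}
    (hd : ∀ᶠ z in 𝓝[≠] c, DifferentiableAt ℂ g z)
    (hb : IsBoundedUnder (· ≤ ·) (𝓝[≠] c) fun z ↦ ‖g z‖) :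
    ∃ G : ℂ → ℂ, AnalyticAt ℂ G c ∧ G =ᶠ[𝓝[≠] c] g := by
  obtain ⟨C, hC⟩ := hb
  have hlim := Complex.tendsto_limUnder_of_differentiable_on_punctured_nhds_of_bounded_under hd
    ⟨C + ‖g c‖, eventually_map.mpr <| (eventually_map.mp hC).mono fun z hz ↦
      (norm_sub_le _ _).trans (add_le_add_left hz _)⟩
  have hEq : Function.update g c (limUnder (𝓝[≠] c) g) =ᶠ[𝓝[≠] c] g := by
    filter_upwards [self_mem_nhdsWithin] with z hz using Function.update_of_ne hz _ _
  refine ⟨_, Complex.analyticAt_of_differentiable_on_punctured_nhds_of_continuousAt ?_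
    (continuousAt_update_same.mpr hlim), hEq⟩
  filter_upwards [hd, eventually_nhdsNE_eventually_nhds_iff.mpr hEq]
    with z hz hEqz using hz.congr_of_eventuallyEq hEqz

/- Picard's theorem is not needed: an injective `f` stays away from some value `f a` near `c`, so
`(f - f a)⁻¹` has a removable singularity at `c`, and the extension has at most a simple zero. -/
theorem exists_tendsto_sub_mul_of_injOn {f : ℂ → ℂ} {c : ℂ} {s : Set ℂ} (hs : s ∈ 𝓝[≠] c)
    (hf : DifferentiableOn ℂ f s) (hinj : s.InjOn f) :
    ∃ L, Tendsto (fun z ↦ (z - c) * f z) (𝓝[≠] c) (𝓝 L) := by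
  have hs_nhds : ∀ᶠ a in 𝓝[≠] c, s ∈ 𝓝 a :=
    eventually_nhdsNE_eventually_nhds_iff.mpr hs
  obtain ⟨a, has, hac⟩ := (hs_nhds.and self_mem_nhdsWithin).exists
  obtain ⟨δ, hδ, hfar⟩ := exists_le_norm_sub_of_injOn (hf.analyticAt has) has hinj hac
  have hfar' : ∀ᶠ q in 𝓝[≠] c, δ ≤ ‖f q - f a‖ :=
    ((hfar.filter_mono nhdsWithin_le_nhds).and hs).mono fun q hq ↦ hq.1 hq.2
  obtain ⟨G, hG, hGf⟩ := exists_analyticAt_eventuallyEq_of_isBoundedUnder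
    (g := fun q ↦ (f q - f a)⁻¹) (c := c)
    (by
      filter_upwards [hs_nhds, hfar'] with q hqs hq
      exact ((hf.differentiableAt hqs).sub_const _).inv (norm_pos_iff.mp (hδ.trans_le hq)))
    ⟨δ⁻¹, eventually_map.mpr <| hfar'.mono fun q hq ↦ by simpa using inv_anti₀ hδ hq⟩
  obtain ⟨L, hL⟩ := exists_tendsto_sub_mul_inv_of_injOn hG (inter_mem hs hGf)
    fun p hp q hq hpq ↦ by
      rw [hp.2.out, hq.2.out] at hpq
      exact hinj hp.1 hq.1 (sub_left_injective (inv_injective hpq))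
  have hconst : Tendsto (fun q ↦ (q - c) * f a) (𝓝[≠] c) (𝓝 0) := by
    have hcont : ContinuousAt (fun q ↦ (q - c) * f a) c := by fun_prop
    simpa [ContinuousAt] using hcont.mono_left nhdsWithin_le_nhds
  refine ⟨L + 0, (hL.add hconst).congr' ?_⟩
  filter_upwards [hGf] with q hq
  rw [hq, inv_inv]
  ring

end InjectiveHolomorphic

section LevelOne
open UpperHalfPlane hiding I
open Filter Topology ModularForm MatrixGroups EisensteinSeries Derivative
open scoped Manifold Real

theorem exists_cuspForm_coe_eq {k : ℤ} {f : ℍ → ℂ} (hf : MDiff f)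
    (hslash : ∀ γ : SL(2, ℤ), f ∣[k] γ = f) (hzero : IsZeroAtImInfty f) :
    ∃ F : CuspForm 𝒮ℒ k, ⇑F = f :=
  ⟨{ toFun := f
     slash_action_eq' := fun _ ⟨γ, hγ⟩ ↦ hγ ▸ hslash γ
     holo' := hf
     zero_at_cusps' := fun {c} hc ↦ by
      rw [Subgroup.IsArithmetic.isCusp_iff_isCusp_SL2Z] at hc
      exact (OnePoint.isZeroAt_iff_forall_SL2Z hc).mpr fun γ _ ↦ (hslash γ).symm ▸ hzero }, rfl⟩

theorem eq_zero_of_isZeroAtImInfty_of_weight_lt_twelve {k : ℤ} (hk : k < 12) {f : ℍ → ℂ}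
    (hf : MDiff f) (hslash : ∀ γ : SL(2, ℤ), f ∣[k] γ = f) (hzero : IsZeroAtImInfty f) :
    f = 0 := by
  obtain ⟨F, rfl⟩ := exists_cuspForm_coe_eq hf hslash hzero
  rw [rank_zero_iff_forall_zero.mp (CuspForm.rank_eq_zero_of_weight_lt_twelve hk) F]
  rfl

theorem slash_SL_eq {k : ℤ} {F : Type*} [FunLike F ℍ ℂ] [SlashInvariantFormClass F 𝒮ℒ k] (f : F)
    (γ : SL(2, ℤ)) : ⇑f ∣[k] γ = f :=
  SlashInvariantFormClass.slash_action_eq f _ ⟨γ, rfl⟩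

theorem tendsto_atImInfty_of_hasSum_qParam {h : ℝ} (hh : 0 < h) {f : ℍ → ℂ} {c : ℕ → ℂ}
    (hf : ∀ τ : ℍ, HasSum (fun m ↦ c m * Function.Periodic.qParam h τ ^ m) (f τ)) :
    Tendsto f atImInfty (𝓝 (c 0)) := by
  let r := ‖Function.Periodic.qParam h (UpperHalfPlane.I : ℍ)‖
  have hr : ∀ᶠ τ : ℍ in atImInfty, ‖Function.Periodic.qParam h τ‖ ≤ r :=
    (qParam_tendsto_atImInfty hh).norm.eventually_le_const
      (norm_zero.trans_lt (norm_pos_iff.mpr (Function.Periodic.qParam_ne_zero _)))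
  have hterm (m : ℕ) : Tendsto (fun τ : ℍ ↦ c m * Function.Periodic.qParam h τ ^ m) atImInfty
      (𝓝 (c m * 0 ^ m)) :=
    ((qParam_tendsto_atImInfty hh).pow m).const_mul (c m)
  have hlim := tendsto_tsum_of_dominated_convergence (hf UpperHalfPlane.I).summable.norm hterm (by
    filter_upwards [hr] with τ hτ m
    simp only [norm_mul, norm_pow]
    gcongr)
  have hsum : ∑' m, c m * 0 ^ m = c 0 := by
    rw [tsum_eq_single 0 fun m hm ↦ by simp [hm]]
    simp
  rw [← hsum]
  exact hlim.congr fun τ ↦ (hf τ).tsum_eq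

theorem tendsto_E2_atImInfty : Tendsto E2 atImInfty (𝓝 1) :=
  tendsto_atImInfty_of_hasSum_qParam one_pos
    (c := fun m ↦ if m = 0 then 1 else -24 * ArithmeticFunction.sigma 1 m) fun τ ↦ by
      simpa [Function.Periodic.qParam] using hasSum_qExpansion_E2 (z := τ)

theorem tendsto_E_atImInfty {k : ℕ} (hk : 3 ≤ k) (hk2 : Even k) :
    Tendsto (ModularForm.E hk) atImInfty (𝓝 1) :=
  E_qExpansion_coeff_zero hk hk2 ▸ tendsto_atImInfty_of_hasSum_qParam one_pos
    (hasSum_qExpansion (ModularForm.E hk) one_pos one_mem_strictPeriods_SL)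

theorem norm_normalizedDeriv_le {f : ℍ → ℂ} (hf : MDiff f) {A M : ℝ}
    (hM : ∀ z : ℍ, A ≤ z.im → ‖f z‖ ≤ M) {z : ℍ} (hz : 2 * A < z.im) :
    ‖D f z‖ ≤ ‖(2 * π * I : ℂ)⁻¹‖ * (M / (z.im / 2)) := by
  rw [UpperHalfPlane.mdifferentiable_iff] at hf
  have hball : ∀ w ∈ Metric.closedBall (z : ℂ) (z.im / 2), A < w.im ∧ 0 < w.im := by
    intro w hw
    have him : |w.im - z.im| ≤ z.im / 2 := by
      simpa using (Complex.abs_im_le_norm (w - z)).trans (mem_closedBall_iff_norm.mp hw)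
    constructor <;> linarith [(abs_le.mp him).1, z.im_pos]
  rw [normalizedDerivOfComplex, norm_mul]
  gcongr
  refine Complex.norm_deriv_le_of_forall_mem_sphere_norm_le (half_pos z.im_pos) ?_ fun w hw ↦ ?_
  · refine DifferentiableOn.diffContOnCl (hf.mono ?_)
    rw [closure_ball _ (half_pos z.im_pos).ne']
    exact fun w hw ↦ (hball w hw).2
  · obtain ⟨hA, h0⟩ := hball w (Metric.sphere_subset_closedBall hw)
    rw [Function.comp_apply, ofComplex_apply_of_im_pos h0]
    exact hM ⟨w, h0⟩ hA.le

theorem tendsto_normalizedDeriv_atImInfty {f : ℍ → ℂ} (hf : MDiff f)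
    (hb : IsBoundedAtImInfty f) : Tendsto (D f) atImInfty (𝓝 0) := by
  obtain ⟨M, A, hM⟩ := isBoundedAtImInfty_iff.mp hb
  have him : Tendsto UpperHalfPlane.im atImInfty atTop := tendsto_comap
  refine squeeze_zero_norm' (a := fun z ↦ ‖(2 * π * I : ℂ)⁻¹‖ * (M / (z.im / 2))) ?_ ?_
  · filter_upwards [him.eventually_gt_atTop (2 * A)] with z hz
      using norm_normalizedDeriv_le hf hM hz
  · simpa using ((him.atTop_div_const two_pos).const_div_atTop M).const_mul ‖(2 * π * I : ℂ)⁻¹‖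

theorem hasDerivAt_D2_comp_ofComplex (γ : SL(2, ℤ)) (z : ℍ) :
    HasDerivAt (D2 γ ∘ ofComplex) (-(2 * π * I) * (γ 1 0 / denom γ z) ^ 2) z := by
  have h := (hasDerivAt_denom_zpow (γ : GL (Fin 2) ℝ) (-1) z).const_mul (2 * π * I * γ 1 0)
  convert! h.congr_of_eventuallyEq ?_ using 1
  · simp only [neg_mul, Int.reduceNeg, Int.cast_neg, Int.cast_one,
      Matrix.SpecialLinearGroup.coe_GL_coe_matrix, Matrix.SpecialLinearGroup.map_apply_coe,
      RingHom.mapMatrix_apply, Int.coe_castRingHom, Matrix.map_apply, ofReal_intCast, one_mul,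
      Int.reduceSub, zpow_neg, zpow_ofNat, mul_neg, neg_inj]
    field_simp
  · filter_upwards [isOpen_upperHalfPlaneSet.mem_nhds z.im_pos] with w hw
    simp [ofComplex_apply_of_im_pos hw, D2, div_eq_mul_inv]

theorem mdifferentiable_D2 (γ : SL(2, ℤ)) : MDiff (D2 γ) := fun z ↦
  UpperHalfPlane.mdifferentiableAt_iff.mpr (hasDerivAt_D2_comp_ofComplex γ z).differentiableAt

/- This Riccati equation is why the quasimodular correction terms of `E₂` cancel in
`D E₂ - E₂² / 12`. -/
theorem normalizedDeriv_D2 (γ : SL(2, ℤ)) (z : ℍ) :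
    D (D2 γ) z = 1 / (2 * riemannZeta 2) / 12 * D2 γ z ^ 2 := by
  rw [normalizedDerivOfComplex, (hasDerivAt_D2_comp_ofComplex γ z).deriv, riemannZeta_two, D2]
  have hpi : (π : ℂ) ≠ 0 := ofReal_ne_zero.mpr Real.pi_ne_zero
  have hz := denom_ne_zero γ z
  field_simp
  rw [I_sq]
  ring

theorem normalizedDeriv_E2_sub_sq_slash (γ : SL(2, ℤ)) :
    (D E2 - (12⁻¹ : ℂ) • (E2 * E2)) ∣[(4 : ℤ)] γ = D E2 - (12⁻¹ : ℂ) • (E2 * E2) := by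
  have hserre : D E2 - (12⁻¹ : ℂ) • (E2 * E2) =
      serreDerivative (2 : ℤ) E2 + (12⁻¹ : ℂ) • (E2 * E2) := by
    ext z
    simp
    ring
  have hderiv : serreDerivative (2 : ℤ) E2 ∣[(4 : ℤ)] γ =
      serreDerivative (2 : ℤ) (E2 ∣[(2 : ℤ)] γ) :=
    serreDerivative_slash_equivariant E2_mdifferentiable
  have hsq : (E2 * E2) ∣[(4 : ℤ)] γ = E2 ∣[(2 : ℤ)] γ * E2 ∣[(2 : ℤ)] γ :=
    ModularForm.mul_slash_SL2 2 2 γ E2 E2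
  rw [hserre, SlashAction.add_slash, ModularForm.SL_smul_slash, hderiv, hsq, E2_slash_action,
    serreDerivative_sub _ _ _ E2_mdifferentiable ((mdifferentiable_D2 γ).const_smul _),
    serreDerivative_smul _ _ _ (mdifferentiable_D2 γ)]
  ext z
  simp [normalizedDeriv_D2]
  ring

theorem normalizedDeriv_E2 (z : ℍ) : D E2 z = (E2 z ^ 2 - E₄ z) / 12 := by
  have hlim := ((tendsto_normalizedDeriv_atImInfty E2_mdifferentiable isBoundedAtImInfty_E2).sub
    ((tendsto_E2_atImInfty.mul tendsto_E2_atImInfty).const_smul (12⁻¹ : ℂ))).add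
    ((tendsto_E_atImInfty (k := 4) (by norm_num) ⟨2, rfl⟩).const_smul (12⁻¹ : ℂ))
  rw [mul_one, zero_sub, neg_add_cancel] at hlim
  have hzero := eq_zero_of_isZeroAtImInfty_of_weight_lt_twelve (k := 4) (by norm_num)
    (((normalizedDerivOfComplex_mdifferentiable E2_mdifferentiable).sub
      ((E2_mdifferentiable.mul E2_mdifferentiable).const_smul _)).add (E₄.holo'.const_smul _))
    (fun γ ↦ by
      rw [SlashAction.add_slash, ModularForm.SL_smul_slash, slash_SL_eq,
        normalizedDeriv_E2_sub_sq_slash]) hlim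
  have hz := congrFun hzero z
  simp only [Pi.add_apply, Pi.sub_apply, Pi.smul_apply, Pi.mul_apply, Pi.zero_apply,
    smul_eq_mul] at hz
  linear_combination hz

theorem tendsto_serreDerivative_atImInfty {f : ℍ → ℂ} (hf : MDiff f) {a : ℂ}
    (hlim : Tendsto f atImInfty (𝓝 a)) (k : ℂ) :
    Tendsto (serreDerivative k f) atImInfty (𝓝 (-(k / 12 * a))) := by
  have hD := tendsto_normalizedDeriv_atImInfty hf (hlim.isBigO_one ℝ)
  simpa [div_eq_mul_inv] using
    hD.sub ((tendsto_E2_atImInfty.const_mul (k * 12⁻¹)).mul hlim)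

theorem serreDerivative_eq_smul {k : ℤ} (hk : k < 10) {f g : ℍ → ℂ} {a : ℂ}
    (hf : MDiff f) (hg : MDiff g) (hf_slash : ∀ γ : SL(2, ℤ), f ∣[k] γ = f)
    (hg_slash : ∀ γ : SL(2, ℤ), g ∣[k + 2] γ = g) (hf_lim : Tendsto f atImInfty (𝓝 a))
    (hg_lim : Tendsto g atImInfty (𝓝 a)) :
    serreDerivative k f = (-(k / 12) : ℂ) • g := by
  have hlim := (tendsto_serreDerivative_atImInfty hf hf_lim k).add
    (hg_lim.const_smul (k / 12 : ℂ))
  rw [smul_eq_mul, neg_add_cancel] at hlim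
  have hzero : serreDerivative k f + (k / 12 : ℂ) • g = 0 :=
    eq_zero_of_isZeroAtImInfty_of_weight_lt_twelve (k := k + 2) (by omega)
      ((serreDerivative_mdifferentiable k hf).add (hg.const_smul _)) (fun γ ↦ by
        rw [SlashAction.add_slash, ModularForm.SL_smul_slash, hg_slash,
          serreDerivative_slash_invariant hf (hf_slash γ)]) hlim
  ext z
  have hz := congrFun hzero z
  simp only [Pi.add_apply, Pi.smul_apply, Pi.zero_apply, smul_eq_mul] at hz ⊢
  linear_combination hz

theorem normalizedDeriv_E₄ (z : ℍ) : D E₄ z = (E2 z * E₄ z - E₆ z) / 3 := by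
  have h := serreDerivative_eq_smul (k := 4) (by norm_num) E₄.holo' E₆.holo' (slash_SL_eq E₄)
    (slash_SL_eq E₆) (tendsto_E_atImInfty _ ⟨2, rfl⟩) (tendsto_E_atImInfty _ ⟨3, rfl⟩)
  have hz := congrFun h z
  simp only [serreDerivative_apply, Pi.smul_apply, smul_eq_mul] at hz
  push_cast at hz
  linear_combination hz

theorem normalizedDeriv_E₆ (z : ℍ) : D E₆ z = (E2 z * E₆ z - E₄ z ^ 2) / 2 := by
  have hlim : Tendsto E₄ atImInfty (𝓝 1) := tendsto_E_atImInfty _ ⟨2, rfl⟩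
  have hslash (γ : SL(2, ℤ)) : (⇑E₄ * ⇑E₄) ∣[(8 : ℤ)] γ = ⇑E₄ * ⇑E₄ := by
    rw [show (8 : ℤ) = 4 + 4 from rfl, ModularForm.mul_slash_SL2, slash_SL_eq]
  have h := serreDerivative_eq_smul (k := 6) (by norm_num) E₆.holo' (E₄.holo'.mul E₄.holo')
    (slash_SL_eq E₆) hslash (tendsto_E_atImInfty _ ⟨3, rfl⟩) (mul_one (1 : ℂ) ▸ hlim.mul hlim)
  have hz := congrFun h z
  simp only [serreDerivative_apply, Pi.smul_apply, Pi.mul_apply, smul_eq_mul] at hz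
  push_cast at hz
  linear_combination hz

theorem apply_eq_zero_of_smul_eq_self {k : ℤ} {F : Type*} [FunLike F ℍ ℂ]
    [SlashInvariantFormClass F 𝒮ℒ k] (f : F) {γ : SL(2, ℤ)} {z : ℍ} (hγ : γ • z = z)
    (hdenom : denom γ z ^ k ≠ 1) : f z = 0 := by
  have h := congrFun (slash_SL_eq f γ) z
  rw [ModularForm.SL_slash_apply, hγ, zpow_neg] at h
  by_contra hz
  exact hdenom (inv_eq_one.mp ((mul_eq_left₀ hz).mp h))

theorem E₆_I : E₆ UpperHalfPlane.I = 0 := by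
  refine apply_eq_zero_of_smul_eq_self E₆ (ModularGroup.stabilizer_I.mpr ?_ :
    ModularGroup.S • UpperHalfPlane.I = UpperHalfPlane.I) ?_
  · simp
  · rw [ModularGroup.denom_S, coe_I, show (6 : ℤ) = (6 : ℕ) from rfl, zpow_natCast,
      show I ^ 6 = (I ^ 2) ^ 3 by ring, I_sq]
    norm_num

theorem E₄_ρ : E₄ ρ = 0 := by
  refine apply_eq_zero_of_smul_eq_self E₄ (ModularGroup.stabilizer_ρ.mpr ?_ :
    (ModularGroup.T⁻¹ * ModularGroup.S) • ρ = ρ) ?_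
  · simp
  · have hdenom : denom (ModularGroup.T⁻¹ * ModularGroup.S : SL(2, ℤ)) ρ = ρ := by
      rw [ModularGroup.denom_apply, show (ModularGroup.T⁻¹ * ModularGroup.S : SL(2, ℤ)) 1 0 = 1 by
        decide, show (ModularGroup.T⁻¹ * ModularGroup.S : SL(2, ℤ)) 1 1 = 0 by decide]
      simp
    have hpow : (ρ : ℂ) ^ 4 = ρ := by linear_combination (ρ ^ 2 - ρ : ℂ) * ρ_sq
    rw [hdenom, show (4 : ℤ) = (4 : ℕ) from rfl, zpow_natCast, hpow]
    intro h
    simpa [ρ] using congrArg Complex.im h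

/-- Klein's modular invariant `j`, as the quotient `E₄³ / Δ` of level one forms. -/
noncomputable def kleinJ (z : ℍ) : ℂ := E₄ z ^ 3 / discriminant z

theorem E₄_cube_sub_E₆_sq_ne_zero (z : ℍ) : E₄ z ^ 3 - E₆ z ^ 2 ≠ 0 := fun h ↦
  discriminant_ne_zero z (by rw [discriminant_eq_E₄_cube_sub_E₆_sq, h, zero_div])

theorem kleinJ_eq (z : ℍ) : kleinJ z = 1728 * E₄ z ^ 3 / (E₄ z ^ 3 - E₆ z ^ 2) := by
  rw [kleinJ, discriminant_eq_E₄_cube_sub_E₆_sq, div_div_eq_mul_div, mul_comm]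

theorem kleinJ_I : kleinJ UpperHalfPlane.I = 1728 := by
  have h := E₄_cube_sub_E₆_sq_ne_zero UpperHalfPlane.I
  rw [kleinJ_eq, E₆_I, zero_pow two_ne_zero, sub_zero] at *
  exact mul_div_cancel_right₀ 1728 h

theorem kleinJ_ρ : kleinJ ρ = 0 := by
  rw [kleinJ, E₄_ρ, zero_pow three_ne_zero, zero_div]

theorem im_smul_mul_im_le_one {γ : SL(2, ℤ)} (hγ : γ 1 0 ≠ 0) (z : ℍ) :
    (γ • z).im * z.im ≤ 1 := by
  have hc : (1 : ℝ) ≤ (γ 1 0 : ℝ) ^ 2 := 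
    (one_le_sq_iff_one_le_abs _).mpr (mod_cast Int.one_le_abs hγ)
  have hdenom : (γ 1 0 * z.im) ^ 2 ≤ normSq (denom γ z) := z.c_mul_im_sq_le_normSq_denom γ
  rw [ModularGroup.im_smul_eq_div_normSq, div_mul_eq_mul_div,
    div_le_one (normSq_denom_pos _ z.im_ne_zero)]
  nlinarith [mul_self_nonneg z.im]

theorem qParam_smul_eq {γ : SL(2, ℤ)} {z : ℍ} (hz : 1 < z.im) (hγz : 1 < (γ • z).im) :
    Function.Periodic.qParam 1 (γ • z : ℍ) = Function.Periodic.qParam 1 z := by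
  have hγ : γ 1 0 = 0 := by
    by_contra hγ
    exact (one_lt_mul_of_lt_of_le hγz hz.le).not_ge (im_smul_mul_im_le_one hγ z)
  obtain ⟨n, hn⟩ := ModularGroup.exists_eq_T_zpow_of_c_eq_zero hγ
  rw [hn, ModularGroup.coe_T_zpow_smul_eq, Function.Periodic.qParam, Function.Periodic.qParam,
    Complex.exp_eq_exp_iff_exists_int]
  exact ⟨n, by push_cast; ring⟩

section Invariant
variable {F : ℍ → ℂ}

theorem slash_zero_eq_of_invariant (hinv : ∀ (γ : SL(2, ℤ)) z, F (γ • z) = F z) (γ : SL(2, ℤ)) :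
    F ∣[(0 : ℤ)] γ = F := by
  ext z
  rw [ModularForm.SL_slash_apply, hinv, neg_zero, zpow_zero, mul_one]

theorem periodic_comp_ofComplex_of_invariant (hinv : ∀ (γ : SL(2, ℤ)) z, F (γ • z) = F z) :
    Function.Periodic (F ∘ ofComplex) (1 : ℝ) :=
  SlashInvariantFormClass.periodic_comp_ofComplex (k := 0)
    ({ toFun := F
       slash_action_eq' := fun _ ⟨γ, hγ⟩ ↦ hγ ▸ slash_zero_eq_of_invariant hinv γ } :
      SlashInvariantForm 𝒮ℒ 0)
    one_mem_strictPeriods_SL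

theorem one_lt_im_invQParam {q : ℂ} (hq : q ≠ 0) (hqr : ‖q‖ < Real.exp (-2 * π)) :
    1 < (Function.Periodic.invQParam 1 q).im := by
  rw [← Function.Periodic.norm_qParam_lt_iff one_pos,
    Function.Periodic.qParam_right_inv one_ne_zero hq]
  simpa using hqr

theorem injOn_cuspFunction (hfib : ∀ z w, F z = F w → ∃ γ : SL(2, ℤ), w = γ • z) :
    {q : ℂ | q ≠ 0 ∧ ‖q‖ < Real.exp (-2 * π)}.InjOn
      (Function.Periodic.cuspFunction 1 (F ∘ ofComplex)) := by
  intro p ⟨hp, hpr⟩ q ⟨hq, hqr⟩ hpq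
  have hp1 := one_lt_im_invQParam hp hpr
  have hq1 := one_lt_im_invQParam hq hqr
  have hp0 := one_pos.trans hp1
  have hq0 := one_pos.trans hq1
  rw [Function.Periodic.cuspFunction_eq_of_nonzero _ _ hp,
    Function.Periodic.cuspFunction_eq_of_nonzero _ _ hq, Function.comp_apply, Function.comp_apply,
    ofComplex_apply_of_im_pos hp0, ofComplex_apply_of_im_pos hq0] at hpq
  obtain ⟨γ, hγ⟩ := hfib _ _ hpq
  have hparam := qParam_smul_eq (γ := γ) (z := ⟨_, hp0⟩) hp1 (hγ ▸ hq1)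
  rw [← hγ] at hparam
  simpa only [Function.Periodic.qParam_right_inv one_ne_zero hp,
    Function.Periodic.qParam_right_inv one_ne_zero hq] using hparam.symm

theorem exists_tendsto_mul_discriminant (hF : MDiff F)
    (hinv : ∀ (γ : SL(2, ℤ)) z, F (γ • z) = F z)
    (hfib : ∀ z w, F z = F w → ∃ γ : SL(2, ℤ), w = γ • z) :
    ∃ L, Tendsto (fun z ↦ F z * discriminant z) atImInfty (𝓝 L) := by
  have hper := periodic_comp_ofComplex_of_invariant hinv
  have hs : {q : ℂ | q ≠ 0 ∧ ‖q‖ < Real.exp (-2 * π)} ∈ 𝓝[≠] 0 := by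
    filter_upwards [self_mem_nhdsWithin,
      nhdsWithin_le_nhds (Metric.ball_mem_nhds 0 (Real.exp_pos (-2 * π)))] with q hq hqr
    exact ⟨hq, mem_ball_zero_iff.mp hqr⟩
  have hdiff : DifferentiableOn ℂ (Function.Periodic.cuspFunction 1 (F ∘ ofComplex))
      {q : ℂ | q ≠ 0 ∧ ‖q‖ < Real.exp (-2 * π)} := by
    intro q ⟨hq, hqr⟩
    rw [← Function.Periodic.qParam_right_inv one_ne_zero hq]
    exact (hper.differentiableAt_cuspFunction one_ne_zero (UpperHalfPlane.mdifferentiableAt_iff.mp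
      (hF ⟨_, one_pos.trans (one_lt_im_invQParam hq hqr)⟩))).differentiableWithinAt
  obtain ⟨L, hL⟩ := exists_tendsto_sub_mul_of_injOn hs hdiff (injOn_cuspFunction hfib)
  have hq : Tendsto (fun z : ℍ ↦ Function.Periodic.qParam 1 z) atImInfty (𝓝[≠] 0) :=
    (Function.Periodic.qParam_tendsto one_pos).comp tendsto_coe_atImInfty
  refine ⟨L * 1, ((hL.comp hq).mul tendsto_atImInfty_tprod_one_sub_eta_q_pow).congr fun z ↦ ?_⟩
  rw [discriminant_eq_q_prod, Function.comp_apply, hper.eq_cuspFunction one_ne_zero,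
    Function.comp_apply, ofComplex_apply, sub_zero]
  ring

theorem exists_eq_mul_kleinJ_add (hF : MDiff F) (hinv : ∀ (γ : SL(2, ℤ)) z, F (γ • z) = F z)
    {L : ℂ} (hL : Tendsto (fun z ↦ F z * discriminant z) atImInfty (𝓝 L)) :
    ∃ b, ∀ z, F z = L * kleinJ z + b := by
  have hlim : Tendsto E₄ atImInfty (𝓝 1) := tendsto_E_atImInfty _ ⟨2, rfl⟩
  have hE : ∀ γ : SL(2, ℤ), (⇑E₄ * (E₄ * E₄)) ∣[(12 : ℤ)] γ = E₄ * (E₄ * E₄) := fun γ ↦ by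
    rw [show (12 : ℤ) = 4 + (4 + 4) from rfl, ModularForm.mul_slash_SL2,
      ModularForm.mul_slash_SL2, slash_SL_eq]
  have hFΔ : ∀ γ : SL(2, ℤ), (F * discriminant) ∣[(12 : ℤ)] γ = F * discriminant := fun γ ↦ by
    rw [show (12 : ℤ) = 0 + 12 from rfl, ModularForm.mul_slash_SL2,
      slash_zero_eq_of_invariant hinv, ← CuspForm.coe_discriminant, slash_SL_eq]
  have hcusp := hL.add ((hlim.mul (hlim.mul hlim)).const_smul (-L))
  rw [mul_one, mul_one, smul_eq_mul, mul_one, add_neg_cancel] at hcusp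
  obtain ⟨G, hG⟩ := exists_cuspForm_coe_eq (k := 12)
    (f := F * discriminant + (-L) • (⇑E₄ * (E₄ * E₄)))
    ((hF.mul CuspForm.discriminant.holo').add
      ((E₄.holo'.mul (E₄.holo'.mul E₄.holo')).const_smul (-L)))
    (fun γ ↦ by rw [SlashAction.add_slash, ModularForm.SL_smul_slash, hE, hFΔ]) hcusp
  obtain ⟨b, rfl⟩ := CuspForm.exists_smul_discriminant_of_weight_eq_twelve G
  refine ⟨b, fun z ↦ ?_⟩
  have hz : b * discriminant z = F z * discriminant z + -L * (E₄ z * (E₄ z * E₄ z)) := congrFun hG z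
  have hΔ := discriminant_ne_zero z
  rw [kleinJ]
  field_simp
  linear_combination -hz

theorem eq_kleinJ (hF : MDiff F) (hinv : ∀ (γ : SL(2, ℤ)) z, F (γ • z) = F z)
    (hfib : ∀ z w, F z = F w → ∃ γ : SL(2, ℤ), w = γ • z) (hI : F UpperHalfPlane.I = 1728)
    (hρ : F ρ = 0) : F = kleinJ := by
  obtain ⟨L, hL⟩ := exists_tendsto_mul_discriminant hF hinv hfib
  obtain ⟨b, hb⟩ := exists_eq_mul_kleinJ_add hF hinv hL
  have hb0 : b = 0 := by simpa [kleinJ_ρ, hρ] using (hb ρ).symm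
  have hL1 : L = 1 := by simpa [kleinJ_I, hI, hb0] using (hb UpperHalfPlane.I).symm
  ext z
  rw [hb z, hL1, hb0, one_mul, add_zero]

end Invariant

theorem hasDerivAt_comp_ofComplex {f : ℍ → ℂ} (hf : MDiff f) {z : ℂ} (hz : 0 < z.im) :
    HasDerivAt (f ∘ ofComplex) (2 * π * I * D f (ofComplex z)) z := by
  have hdiff := UpperHalfPlane.mdifferentiableAt_iff.mp (hf ⟨z, hz⟩)
  rw [normalizedDerivOfComplex, ofComplex_apply_of_im_pos hz,
    mul_inv_cancel_left₀ two_pi_I_ne_zero]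
  exact hdiff.hasDerivAt

theorem isRamanujanSystem_E2_E₄_E₆ : IsRamanujanSystem (2 * π * I) (E2 ∘ ofComplex)
    (E₄ ∘ ofComplex) (E₆ ∘ ofComplex) UHP where
  hasDerivAt_P z hz := normalizedDeriv_E2 (ofComplex z) ▸
    hasDerivAt_comp_ofComplex E2_mdifferentiable hz
  hasDerivAt_Q z hz := normalizedDeriv_E₄ (ofComplex z) ▸ hasDerivAt_comp_ofComplex E₄.holo' hz
  hasDerivAt_R z hz := normalizedDeriv_E₆ (ofComplex z) ▸ hasDerivAt_comp_ofComplex E₆.holo' hz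

theorem coe_smul_eq_moebiusZ (γ : SL(2, ℤ)) (z : ℍ) : ((γ • z : ℍ) : ℂ) = moebiusZ γ z := by
  rw [coe_specialLinearGroup_apply]
  simp [moebiusZ]

theorem eq_kleinJ_ofComplex {J : ℂ → ℂ} (hhol : DifferentiableOn ℂ J UHP)
    (hinv : ∀ γ : SL(2, ℤ), ∀ z ∈ UHP, J (moebiusZ γ z) = J z)
    (hfib : ∀ z ∈ UHP, ∀ w ∈ UHP, J z = J w → ∃ γ : SL(2, ℤ), w = moebiusZ γ z)
    (hJi : J I = 1728) (hJρ : J ((-1 + Real.sqrt 3 * I) / 2) = 0) {z : ℂ} (hz : z ∈ UHP) :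
    J z = kleinJ (ofComplex z) := by
  have hF : MDiff (fun z : ℍ ↦ J z) := UpperHalfPlane.mdifferentiable_iff.mpr <|
    hhol.congr fun w hw ↦ by rw [Function.comp_apply, ofComplex_apply_of_im_pos hw]
  have hρ : (ρ : ℂ) = (-1 + Real.sqrt 3 * I) / 2 := by
    apply Complex.ext <;> simp [ρ]
  have h := eq_kleinJ hF (fun γ z ↦ by rw [coe_smul_eq_moebiusZ, hinv γ z z.im_pos])
    (fun z w hzw ↦ (hfib z z.im_pos w w.im_pos hzw).imp fun γ hγ ↦
      UpperHalfPlane.ext (hγ.trans (coe_smul_eq_moebiusZ γ z).symm)) hJi (hρ ▸ hJρ)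
  rw [← h, ofComplex_apply_of_im_pos hz]

end LevelOne

/-- The modular `j`-function (characterized as the holomorphic `SL₂(ℤ)`-invariant function on `ℍ`
whose fibers are exactly the `SL₂(ℤ)`-orbits, which is surjective onto `ℂ`, with `j(i) = 1728`
and `j(ρ) = 0`) satisfies the third-order differential equation `S(j) + R(j)·(j')² = 0` on `ℍ`. -/
theorem j_satisfies_schwarzian_ode (J : ℂ → ℂ)
    (hhol : DifferentiableOn ℂ J UHP)
    (hinv : ∀ (g : Matrix.SpecialLinearGroup (Fin 2) ℤ), ∀ z ∈ UHP, J (moebiusZ g z) = J z)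
    (hfib : ∀ z ∈ UHP, ∀ w ∈ UHP, J z = J w → ∃ g : Matrix.SpecialLinearGroup (Fin 2) ℤ,
      w = moebiusZ g z)
    (hsurj : ∀ w : ℂ, ∃ z ∈ UHP, J z = w)
    (hJi : J Complex.I = 1728)
    (hJρ : J ((-1 + Real.sqrt 3 * Complex.I) / 2) = 0) :
    ∀ z ∈ UHP, J z ≠ 0 → J z ≠ 1728 →
      schwarzian J z + Rj (J z) * (deriv J z) ^ 2 = 0 := by
  intro z hz hJ₀ hJ₁
  have hJ : ∀ w ∈ UHP, J w = kleinJ (UpperHalfPlane.ofComplex w) := fun w ↦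
    eq_kleinJ_ofComplex hhol hinv hfib hJi hJρ
  exact isRamanujanSystem_E2_E₄_E₆.schwarzian_add_Rj_mul_deriv_sq two_pi_I_ne_zero
    UpperHalfPlane.isOpen_upperHalfPlaneSet
    (fun w _ ↦ E₄_cube_sub_E₆_sq_ne_zero (UpperHalfPlane.ofComplex w))
    (fun w hw ↦ (hJ w hw).trans (kleinJ_eq _)) hz hJ₀ hJ₁
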